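/- Let $G=(V,E)$ be a connected finite simple graph with $|V|\neq 2$ (equivalently, $G$ is connected and is not the complete graph $K_2$). Call a vertex of a tree a leaf if it has degree exactly $1$ in the tree, and let $\ell(G)$ be the maximum number of leaves over all spanning trees of $G$. For $X\subseteq V$ let $N^{\circ}_G(X)$ be the set of vertices in $V\setminus X$ that are adjacent to at least one vertex of $X$. Then there exists a nonempty set $X\subseteq V$ such that the induced subgraph $G[X]$ is connected and $|N^{\circ}_G(X)|=\ell(G)$. -/

import Mathlib

noncomputable section

open scoped Classical

/-- The degree of a vertex in a graph on a finite vertex type. -/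
def deg {W : Type*} [Fintype W] (T : SimpleGraph W) (v : W) : ℕ :=
  (Finset.univ.filter (fun w => T.Adj v w)).card

/-- A leaf of a graph (in particular, of a tree) is a vertex of degree 1. -/
def IsLeaf {W : Type*} [Fintype W] (T : SimpleGraph W) (v : W) : Prop :=
  deg T v = 1

/-- The number of leaves of a graph (in particular, of a tree). -/
def leafCount {W : Type*} [Fintype W] (T : SimpleGraph W) : ℕ :=
  (Finset.univ.filter (fun v => IsLeaf T v)).card

/-- The open neighborhood of a vertex, as a finset. -/
def nbrFinset {V : Type*} [Fintype V] (G : SimpleGraph V) (x : V) : Finset V :=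
  Finset.univ.filter (fun y => G.Adj x y)

/-- The closed neighborhood of a vertex, as a finset. -/
def closedNbr {V : Type*} [Fintype V] [DecidableEq V] (G : SimpleGraph V) (x : V) : Finset V :=
  insert x (nbrFinset G x)

/-- The closed neighborhood of a set of vertices. -/
def closedNbrSet {V : Type*} [Fintype V] [DecidableEq V] (G : SimpleGraph V)
    (A : Finset V) : Finset V :=
  A.biUnion (closedNbr G)

/-- The open neighborhood of a set of vertices: `N_G(A) \ A`. -/
def openNbrSet {V : Type*} [Fintype V] [DecidableEq V] (G : SimpleGraph V)
    (A : Finset V) : Finset V :=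
  closedNbrSet G A \ A

/-- `A` is a (nonempty) connected set of `G`: the induced subgraph `G[A]` is connected. -/
def IsConnSet {V : Type*} (G : SimpleGraph V) (A : Finset V) : Prop :=
  (G.induce (A : Set V)).Connected

/-- For connected `G`: the maximum number of leaves over all spanning trees of `G`.
The set of leaf counts is nonempty (`G` has a spanning tree) and bounded by the number of
vertices, so the supremum is a maximum. -/
def ell {V : Type*} [Fintype V] (G : SimpleGraph V) : ℕ :=
  sSup {k | ∃ T : SimpleGraph V, T ≤ G ∧ T.IsTree ∧ leafCount T = k}

end

open scoped Classical in
theorem deg_eq_degree {W : Type*} [Fintype W] (T : SimpleGraph W) (v : W) :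
    deg T v = T.degree v := by
  rw [deg, ← SimpleGraph.card_neighborFinset_eq_degree]
  congr 1
  ext w
  simp

theorem isLeaf_iff_existsUnique_adj {W : Type*} [Fintype W] (T : SimpleGraph W) (v : W) :
    IsLeaf T v ↔ ∃! w, T.Adj v w := by
  classical
  rw [IsLeaf, deg_eq_degree, SimpleGraph.degree_eq_one_iff_existsUnique_adj]

/-- Two adjacent leaves of a connected graph are its only vertices. -/
theorem card_eq_two_of_adj_isLeaf {W : Type*} [Fintype W] {T : SimpleGraph W}
    (hT : T.Connected) {v w : W} (hvw : T.Adj v w) (hv : IsLeaf T v) (hw : IsLeaf T w) :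
    Fintype.card W = 2 := by
  classical
  rw [isLeaf_iff_existsUnique_adj] at hv hw
  have hclosed : ∀ a b : W, (a = v ∨ a = w) → T.Walk a b → (b = v ∨ b = w) := by
    intro a b ha p
    induction p with
    | nil => exact ha
    | cons hadj _ ih =>
      apply ih
      rcases ha with rfl | rfl
      · exact Or.inr (hv.unique hadj hvw)
      · exact Or.inl (hw.unique hadj hvw.symm)
  have huniv : (Finset.univ : Finset W) = {v, w} := by
    ext u
    obtain ⟨p⟩ := hT.preconnected v u
    simpa using hclosed v u (Or.inl rfl) p
  rw [← Finset.card_univ, huniv, Finset.card_pair hvw.ne]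

/-- The maximum in the definition of `ell` is attained. -/
theorem exists_isTree_leafCount_eq_ell {V : Type*} [Fintype V] {G : SimpleGraph V}
    (hG : G.Connected) : ∃ T : SimpleGraph V, T ≤ G ∧ T.IsTree ∧ leafCount T = ell G := by
  refine Nat.sSup_mem
    (s := {k | ∃ T : SimpleGraph V, T ≤ G ∧ T.IsTree ∧ leafCount T = k}) ?_ ?_
  · obtain ⟨T, hle, hT⟩ := hG.exists_isTree_le
    exact ⟨_, T, hle, hT, rfl⟩
  · refine ⟨Fintype.card V, ?_⟩
    rintro _ ⟨T, -, -, rfl⟩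
    exact Finset.card_le_univ _

theorem mem_openNbrSet {V : Type*} [Fintype V] [DecidableEq V] {G : SimpleGraph V}
    {A : Finset V} {y : V} : y ∈ openNbrSet G A ↔ (∃ x ∈ A, G.Adj x y) ∧ y ∉ A := by
  simp only [openNbrSet, closedNbrSet, closedNbr, nbrFinset, Finset.mem_sdiff,
    Finset.mem_biUnion, Finset.mem_insert, Finset.mem_filter, Finset.mem_univ, true_and]
  constructor
  · rintro ⟨⟨x, hx, rfl | h⟩, hy⟩
    · exact absurd hx hy
    · exact ⟨⟨x, hx, h⟩, hy⟩
  · rintro ⟨⟨x, hx, h⟩, hy⟩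
    exact ⟨⟨x, hx, Or.inr h⟩, hy⟩

/-- For every connected finite simple graph `G` whose number of vertices is not two (that is,
`G` is not `K₂`), there is a nonempty connected set `X` of `G` with `|N°_G(X)| = ℓ(G)`. -/
theorem exists_connset_open_nbr_ell {V : Type*} [Fintype V] [DecidableEq V]
    (G : SimpleGraph V) (hconn : G.Connected) (hcard : Fintype.card V ≠ 2) :
    ∃ Xs : Finset V, Xs.Nonempty ∧ IsConnSet G Xs ∧ (openNbrSet G Xs).card = ell G := by
  classical
  obtain ⟨T, hle, hT, hell⟩ := exists_isTree_leafCount_eq_ell hconn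
  have hnbr : ∀ v, IsLeaf T v → ∃ w, T.Adj v w ∧ ¬ IsLeaf T w := by
    intro v hv
    obtain ⟨w, hvw⟩ := ((isLeaf_iff_existsUnique_adj T v).1 hv).exists
    exact ⟨w, hvw, fun hw => hcard (card_eq_two_of_adj_isLeaf hT.connected hvw hv hw)⟩
  let X : Finset V := Finset.univ.filter fun v => ¬ IsLeaf T v
  have hmem : ∀ v, v ∈ X ↔ ¬ IsLeaf T v := by simp [X]
  have hne : X.Nonempty := by
    obtain ⟨v⟩ := hconn.nonempty
    by_cases hv : IsLeaf T v
    · obtain ⟨w, -, hw⟩ := hnbr v hv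
      exact ⟨w, (hmem w).2 hw⟩
    · exact ⟨v, (hmem v).2 hv⟩
  refine ⟨X, hne, ?_, ?_⟩
  · have hpre : (T.induce (X : Set V)).Preconnected := by
      apply hT.connected.preconnected.induce_of_degree_eq_one
      intro v hv
      have hleaf : IsLeaf T v := by simpa [hmem] using hv
      exact fun a ha b hb => ((isLeaf_iff_existsUnique_adj T v).1 hleaf).unique ha hb
    have : Nonempty (X : Set V) := hne.to_subtype
    exact (SimpleGraph.Connected.mk hpre).mono fun _ _ h => hle h
  · rw [← hell, leafCount]
    congr 1
    ext y
    simp only [mem_openNbrSet, hmem, not_not, Finset.mem_filter, Finset.mem_univ, true_and]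
    refine ⟨fun h => h.2, fun hy => ⟨?_, hy⟩⟩
    obtain ⟨w, hyw, hw⟩ := hnbr y hy
    exact ⟨w, hw, hle hyw.symm⟩
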